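/- arXiv:2011.01791 — 3 statements merged into one kernel-verified Lean document; each statement's English description precedes it below -/
import Mathlib

section
/- In any identical singleton congestion game with a partition coalition structure C, every feasible allocation a that is maximal with respect to the C-balance dominance relation is C-stable, i.e., no coalition c ∈ C blocks a. -/
/-!
Let `σ` and `τ` assign to each agent its resource before and after a deviation of the coalition `c`.
If an agent using resource `k` pays `s!` when `s` agents use `k`, the total cost of `c` is
`∑ k, z k * (z k + b k)!`, where `z k` members of `c` and `b k` outsiders use `k`; the numbers `b k`
do not change. A blocking deviation decreases this cost strictly.

*Exchange.* If `p` loses members of `c` from `σ` to `τ`, follow the moves out of `p` until they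
reach a resource `q` that gains members. Performing only these moves turns `σ` into a feasible
assignment `ρ` whose member counts differ from those of `σ` by one unit transferred from `p` to `q`;
performing only the others gives an assignment closer to `σ` than `τ` is. Since the cost is a sum of
convex functions of the member counts, induction on the number of moves shows that if no such `ρ`
is cheaper than `σ`, then neither is `τ`.

*Single transfers.* A transfer from `p` to `q` makes the kernel smaller if the load of `p` exceeds
that of `q` by at least two; if it exceeds it by one, the kernel does not change, and the `c`-kernel
becomes smaller if `p` has at least two members of `c` more than `q`. Maximality excludes both, and
then the transfer does not decrease the cost: the marginal cost of one more member is ordered by the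
load first and by the number of members second, because `(s + 1) * (s + 1)! ≤ (s + 2)!`.
-/

variable {N M : Type*} [Fintype N] [DecidableEq N] [Fintype M] [DecidableEq M]

/-- `a` is an allocation: resources hold pairwise disjoint sets of agents whose union is `N`. -/
def IsAllocation (a : M → Finset N) : Prop :=
  (∀ i₁ i₂ : M, i₁ ≠ i₂ → Disjoint (a i₁) (a i₂)) ∧ (∀ j : N, ∃ i : M, j ∈ a i)

/-- `a` respects the feasibility constraint `f`. -/
def Feasible (f a : M → Finset N) : Prop := ∀ i : M, a i ⊆ f i

/-- Coalition `c` blocks allocation `a` via the (feasible) allocation `abar`. -/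
def BlocksVia (f : M → Finset N) (c : Finset N) (a abar : M → Finset N) : Prop :=
  IsAllocation abar ∧ Feasible f abar ∧
  (∀ i : M, a i \ c = abar i \ c) ∧
  (∀ j ∈ c, ∀ i₁ i₂ : M, j ∈ a i₁ → j ∈ abar i₂ → (abar i₂).card ≤ (a i₁).card) ∧
  (∃ j ∈ c, ∃ i₁ i₂ : M, j ∈ a i₁ ∧ j ∈ abar i₂ ∧ (abar i₂).card < (a i₁).card)

/-- Coalition `c` blocks allocation `a`. -/
def Blocks (f : M → Finset N) (c : Finset N) (a : M → Finset N) : Prop :=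
  ∃ abar : M → Finset N, BlocksVia f c a abar

/-- The kernel of `a`: the list of resource cardinalities, in nonincreasing order. -/
def kernel (a : M → Finset N) : List ℕ :=
  ((Finset.univ.val.map fun i : M => (a i).card).sort (· ≤ ·)).reverse

/-- The `c`-kernel of `a`: the list `(|c ∩ a i|)_{i ∈ M}`, in nonincreasing order. -/
def ckernel (c : Finset N) (a : M → Finset N) : List ℕ :=
  ((Finset.univ.val.map fun i : M => (c ∩ a i).card).sort (· ≤ ·)).reverse

/-- The `c`-welfare-kernel of `a`: the list `(|c_n|, |c_{n-1}|, …, |c_1|)`, where `c_s` is the set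
of members of `c` assigned to a resource of cardinality `s`, and `n` is the number of agents. -/
def wkernel (c : Finset N) (a : M → Finset N) : List ℕ :=
  (List.range (Fintype.card N)).map fun t =>
    (c.filter fun j => ∃ i : M, j ∈ a i ∧ (a i).card = Fintype.card N - t).card

/-- `a` C-balance dominates `abar`. -/
def BalanceDominates (C : Set (Finset N)) (a abar : M → Finset N) : Prop :=
  List.Lex (· < ·) (kernel a) (kernel abar) ∨
  (kernel a = kernel abar ∧
    (∀ c ∈ C, ckernel c a = ckernel c abar ∨ List.Lex (· < ·) (ckernel c a) (ckernel c abar)) ∧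
    (∃ c ∈ C, List.Lex (· < ·) (ckernel c a) (ckernel c abar)))

/-- `C` is a partition coalition structure. -/
def IsPartitionStructure (C : Set (Finset N)) : Prop :=
  (∀ c ∈ C, c.Nonempty) ∧
  (∀ c ∈ C, ∀ c' ∈ C, c ≠ c' → Disjoint c c') ∧
  (∀ j : N, ∃ c ∈ C, j ∈ c)

section SortedLists

variable {α κ : Type*} [LinearOrder α]

lemma lex_of_count_lt {l' l : List α} (t : α) (hl' : l'.Pairwise (· ≥ ·))
    (hl : l.Pairwise (· ≥ ·)) (habove : ∀ s, t < s → l'.count s = l.count s)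
    (ht : l'.count t < l.count t) : List.Lex (· < ·) l' l := by
  induction l' generalizing l with
  | nil =>
    cases l with
    | nil => simp at ht
    | cons v vs => exact .nil
  | cons u us ih =>
    cases l with
    | nil => simp at ht
    | cons v vs =>
      rw [List.pairwise_cons] at hl' hl
      rcases lt_trichotomy u v with huv | rfl | hvu
      · exact .rel huv
      · exact .cons (ih hl'.2 hl.2 (fun s hs ↦ by simpa [List.count_cons] using habove s hs)
          (by simpa [List.count_cons] using ht))
      · have hzero : ∀ s, u ≤ s → (v :: vs).count s = 0 := fun s hus ↦
          List.count_eq_zero.2 fun hmem ↦ (hvu.trans_le hus).not_ge <| by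
            rcases List.mem_cons.1 hmem with rfl | hmem
            exacts [le_rfl, hl.1 s hmem]
        rcases lt_or_ge t u with htu | hut
        · have hu := habove u htu
          simp [hzero u le_rfl] at hu
        · simp [hzero t hut] at ht

lemma lex_sort_reverse_of_count_lt {A B : Multiset α} (t : α)
    (habove : ∀ s, t < s → A.count s = B.count s) (ht : A.count t < B.count t) :
    List.Lex (· < ·) (A.sort (· ≤ ·)).reverse (B.sort (· ≤ ·)).reverse := by
  have hcount (D : Multiset α) (s : α) : (D.sort (· ≤ ·)).reverse.count s = D.count s := by
    rw [List.count_reverse, ← Multiset.coe_count, Multiset.sort_eq]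
  refine lex_of_count_lt t (List.pairwise_reverse.2 (A.pairwise_sort _))
    (List.pairwise_reverse.2 (B.pairwise_sort _)) (fun s hs ↦ ?_) ?_
  · rw [hcount, hcount, habove s hs]
  · rwa [hcount, hcount]

lemma lex_sort_map_of_change_le [Fintype κ] {g g' : κ → α} {p : κ} (hp : g' p ≠ g p)
    (hold : ∀ k, g' k ≠ g k → g k ≤ g p) (hnew : ∀ k, g' k ≠ g k → g' k < g p) :
    List.Lex (· < ·) ((Finset.univ.val.map g').sort (· ≤ ·)).reverse
      ((Finset.univ.val.map g).sort (· ≤ ·)).reverse := by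
  refine lex_sort_reverse_of_count_lt (g p) (fun s hs ↦ ?_) ?_
  · rw [Multiset.count_map, Multiset.count_map]
    congr 1
    refine Multiset.filter_congr fun k _ ↦ ?_
    by_cases hk : g' k = g k
    · rw [hk]
    · exact iff_of_false ((hnew k hk).trans hs).ne' ((hold k hk).trans_lt hs).ne'
  · rw [Multiset.count_map, Multiset.count_map]
    refine Finset.card_lt_card (s := {k | g p = g' k}) (t := {k | g p = g k}) ?_
    refine Finset.ssubset_iff_of_subset (fun k hk ↦ ?_) |>.2 ⟨p, by simp, by simpa using hp.symm⟩
    have hk : g p = g' k := by simpa using hk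
    by_contra hne
    exact (hnew k fun h ↦ hne (by simpa [← h] using hk)).ne' hk

end SortedLists

section UnitTransfer

variable {κ : Type*} [DecidableEq κ]

/-- The counts `g'` arise from `g` by moving one unit from `p` to `q`. The equation is additive so
that no subtraction of natural numbers occurs. -/
def IsUnitTransfer (g g' : κ → ℕ) (p q : κ) : Prop :=
  g' + Pi.single p 1 = g + Pi.single q 1

namespace IsUnitTransfer

variable {g g' g'' : κ → ℕ} {p q r k : κ}

lemma apply_source (h : IsUnitTransfer g g' p q) (hpq : p ≠ q) : g' p + 1 = g p := by
  simpa [hpq] using congrFun h p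

lemma apply_target (h : IsUnitTransfer g g' p q) (hpq : p ≠ q) : g' q = g q + 1 := by
  simpa [hpq.symm] using congrFun h q

lemma apply_of_ne (h : IsUnitTransfer g g' p q) (hkp : k ≠ p) (hkq : k ≠ q) : g' k = g k := by
  simpa [hkp, hkq] using congrFun h k

lemma trans (h : IsUnitTransfer g g' p q) (h' : IsUnitTransfer g' g'' q r) :
    IsUnitTransfer g g'' p r := by
  funext k
  have hk := congrFun h k
  have hk' := congrFun h' k
  simp only [Pi.add_apply] at hk hk' ⊢
  omega

lemma add_right (h : IsUnitTransfer g g' p q) (b : κ → ℕ) :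
    IsUnitTransfer (g + b) (g' + b) p q := by
  rw [IsUnitTransfer, add_right_comm, h, add_right_comm]

lemma lex_sort_map [Fintype κ] (h : IsUnitTransfer g g' p q) (hlt : g q + 1 < g p) :
    List.Lex (· < ·) ((Finset.univ.val.map g').sort (· ≤ ·)).reverse
      ((Finset.univ.val.map g).sort (· ≤ ·)).reverse := by
  have hpq : p ≠ q := by
    rintro rfl
    omega
  have hp := h.apply_source hpq
  have hq := h.apply_target hpq
  have hchange : ∀ k, g' k ≠ g k → k = p ∨ k = q := fun k hk ↦ by
    by_contra! hne
    exact hk (h.apply_of_ne hne.1 hne.2)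
  refine lex_sort_map_of_change_le (p := p) (by omega) (fun k hk ↦ ?_) fun k hk ↦ ?_ <;>
    rcases hchange k hk with rfl | rfl <;> omega

lemma map_univ_eq [Fintype κ] (h : IsUnitTransfer g g' p q) (heq : g p = g q + 1) :
    Finset.univ.val.map g' = Finset.univ.val.map g := by
  have hpq : p ≠ q := by
    rintro rfl
    omega
  have hswap : g' = g ∘ Equiv.swap p q := by
    funext k
    have hp := h.apply_source hpq
    have hq := h.apply_target hpq
    rcases eq_or_ne k p with rfl | hkp
    · simp only [Function.comp_apply, Equiv.swap_apply_left]
      omega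
    rcases eq_or_ne k q with rfl | hkq
    · simp only [Function.comp_apply, Equiv.swap_apply_right]
      omega
    · simp only [Function.comp_apply, Equiv.swap_apply_of_ne_of_ne hkp hkq, h.apply_of_ne hkp hkq]
  rw [hswap, ← Multiset.map_map, Multiset.map_univ_val_equiv]

lemma sum_le_sum [Fintype κ] {E : Type*} [AddCommMonoid E] [Preorder E] [AddLeftMono E]
    (h : IsUnitTransfer g g' p q) (hpq : p ≠ q) (w : κ → ℕ → E)
    (hw : w p (g p) + w q (g q) ≤ w p (g' p) + w q (g' q)) :
    ∑ k, w k (g k) ≤ ∑ k, w k (g' k) := by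
  have hsplit (u : κ → ℕ) : ∑ k, w k (u k) =
      ∑ k ∈ {p, q}ᶜ, w k (u k) + (w p (u p) + w q (u q)) := by
    rw [← Finset.sum_pair (f := fun k ↦ w k (u k)) hpq, Finset.sum_compl_add_sum]
  have hrest : ∑ k ∈ {p, q}ᶜ, w k (g' k) = ∑ k ∈ {p, q}ᶜ, w k (g k) :=
    Finset.sum_congr rfl fun k hk ↦ by
      simp only [Finset.mem_compl, Finset.mem_insert, Finset.mem_singleton, not_or] at hk
      rw [h.apply_of_ne hk.1 hk.2]
  rw [hsplit g, hsplit g', hrest]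
  gcongr

end IsUnitTransfer

end UnitTransfer

section Assignments

lemma update_eq_or {ι κ : Type*} [DecidableEq ι] (σ τ : ι → κ) (j i : ι) :
    Function.update σ j (τ j) i = σ i ∨ Function.update σ j (τ j) i = τ i := by
  rcases eq_or_ne i j with rfl | hij
  · exact .inr (Function.update_self ..)
  · exact .inl (Function.update_of_ne hij ..)

variable {ι κ : Type*} [DecidableEq κ] {s : Finset ι} {σ τ ρ : ι → κ}

lemma card_filter_ne_lt_of_mix (hρ : ∀ i, ρ i = σ i ∨ ρ i = τ i) {j : ι} (hj : j ∈ s)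
    (hne : σ j ≠ τ j) (hρj : ρ j = τ j) :
    (s.filter fun i ↦ ρ i ≠ τ i).card < (s.filter fun i ↦ σ i ≠ τ i).card := by
  refine Finset.card_lt_card ((Finset.ssubset_iff_of_subset fun i hi ↦ ?_).2
    ⟨j, by simp [hj, hne], by simp [hρj]⟩)
  obtain ⟨his, hi⟩ := Finset.mem_filter.1 hi
  exact Finset.mem_filter.2 ⟨his, (hρ i).resolve_right hi ▸ hi⟩

/-- The assignment making exactly those moves from `σ` to `τ` that `ρ` does not make. -/
def complementaryMix (σ τ ρ : ι → κ) (j : ι) : κ :=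
  if ρ j = σ j then τ j else σ j

lemma complementaryMix_eq_or (σ τ ρ : ι → κ) (j : ι) :
    complementaryMix σ τ ρ j = τ j ∨ complementaryMix σ τ ρ j = σ j :=
  ite_eq_or_eq ..

end Assignments

section Occupancy

variable {ι κ : Type*} [DecidableEq κ]

/-- The number of agents in `s` that the assignment `σ` sends to resource `k`: the load of `k` if
`s = univ`, and its number of members of the coalition `s` in general. -/
def occupancy (s : Finset ι) (σ : ι → κ) (k : κ) : ℕ :=
  (s.filter fun j ↦ σ j = k).card

variable {s : Finset ι} {σ τ ρ : ι → κ}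

lemma occupancy_congr (h : ∀ j ∈ s, σ j = τ j) : occupancy s σ = occupancy s τ :=
  funext fun _ ↦ congrArg Finset.card (Finset.filter_congr fun j hj ↦ by rw [h j hj])

lemma sum_occupancy [Fintype κ] (s : Finset ι) (σ : ι → κ) : ∑ k, occupancy s σ k = s.card :=
  (Finset.card_eq_sum_card_fiberwise fun _ _ ↦ Finset.mem_coe.2 (Finset.mem_univ _)).symm

lemma sum_occupancy_mul [Fintype κ] (s : Finset ι) (σ : ι → κ) (w : κ → ℕ) :
    ∑ k, occupancy s σ k * w k = ∑ j ∈ s, w (σ j) := by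
  simp [← Finset.sum_fiberwise' s σ, occupancy]

lemma occupancy_add_occupancy_compl [Fintype ι] [DecidableEq ι] (s : Finset ι) (σ : ι → κ) :
    occupancy s σ + occupancy sᶜ σ = occupancy Finset.univ σ := by
  funext k
  simp only [Pi.add_apply, occupancy, Finset.card_filter, Finset.sum_add_sum_compl]

lemma occupancy_pos {j : ι} (hj : j ∈ s) (σ : ι → κ) : 0 < occupancy s σ (σ j) :=
  Finset.card_pos.2 ⟨j, by simpa using hj⟩

lemma isUnitTransfer_update [DecidableEq ι] {j : ι} (hj : j ∈ s) (σ : ι → κ) (k : κ) :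
    IsUnitTransfer (occupancy s σ) (occupancy s (Function.update σ j k)) (σ j) k := by
  funext m
  have hrest : ∑ i ∈ s.erase j, (if Function.update σ j k i = m then 1 else 0) =
      ∑ i ∈ s.erase j, (if σ i = m then 1 else 0) :=
    Finset.sum_congr rfl fun i hi ↦ by rw [Function.update_of_ne (Finset.ne_of_mem_erase hi)]
  simp only [Pi.add_apply, occupancy, Finset.card_filter, ← Finset.add_sum_erase s _ hj, hrest,
    Function.update_self, Pi.single_apply, eq_comm (a := m)]
  ring

lemma exists_mem_ne_of_occupancy_lt {p : κ} (hp : occupancy s τ p < occupancy s σ p) :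
    ∃ j ∈ s, σ j = p ∧ τ j ≠ p := by
  by_contra! hstay
  refine hp.not_ge (Finset.card_le_card fun j hj ↦ ?_)
  obtain ⟨hj, hjp⟩ := Finset.mem_filter.1 hj
  exact Finset.mem_filter.2 ⟨hj, hstay j hj hjp⟩

lemma exists_isUnitTransfer {p : κ} (hp : occupancy s τ p < occupancy s σ p) :
    ∃ ρ q, (∀ j, ρ j = σ j ∨ ρ j = τ j) ∧ occupancy s σ q < occupancy s τ q ∧
      IsUnitTransfer (occupancy s σ) (occupancy s ρ) p q := by
  classical
  induction hn : (s.filter fun j ↦ σ j ≠ τ j).card using Nat.strong_induction_on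
    generalizing σ p with
  | _ n ih =>
    obtain ⟨j, hj, rfl, hjp⟩ := exists_mem_ne_of_occupancy_lt hp
    set σ' := Function.update σ j (τ j)
    have hmix : ∀ i, σ' i = σ i ∨ σ' i = τ i := update_eq_or σ τ j
    have hmove : IsUnitTransfer (occupancy s σ) (occupancy s σ') (σ j) (τ j) :=
      isUnitTransfer_update hj σ (τ j)
    by_cases hgain : occupancy s σ (τ j) < occupancy s τ (τ j)
    · exact ⟨σ', τ j, hmix, hgain, hmove⟩
    have hsource := hmove.apply_source hjp.symm
    have htarget := hmove.apply_target hjp.symm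
    obtain ⟨ρ, q, hρ, hq, hρq⟩ :=
      ih _ (hn ▸ card_filter_ne_lt_of_mix hmix hj hjp.symm (Function.update_self ..))
        (σ := σ') (p := τ j) (by omega) rfl
    refine ⟨ρ, q, fun i ↦ ?_, ?_, hmove.trans hρq⟩
    · rcases hρ i with hi | hi
      · exact hi ▸ hmix i
      · exact .inr hi
    · have hqp : q ≠ σ j := by
        rintro rfl
        omega
      have hqk : q ≠ τ j := by
        rintro rfl
        omega
      rwa [hmove.apply_of_ne hqp hqk] at hq

lemma occupancy_add_occupancy_complementaryMix (hρ : ∀ j, ρ j = σ j ∨ ρ j = τ j) :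
    occupancy s ρ + occupancy s (complementaryMix σ τ ρ) = occupancy s σ + occupancy s τ := by
  funext k
  simp only [Pi.add_apply, occupancy, Finset.card_filter, ← Finset.sum_add_distrib]
  refine Finset.sum_congr rfl fun j _ ↦ ?_
  by_cases hj : ρ j = σ j
  · simp [complementaryMix, hj]
  · simp [complementaryMix, (hρ j).resolve_left hj, (hρ j).resolve_left hj ▸ hj, add_comm]

lemma card_complementaryMix_ne_lt (hρ : ∀ j, ρ j = σ j ∨ ρ j = τ j)
    (hne : occupancy s ρ ≠ occupancy s σ) :
    (s.filter fun j ↦ complementaryMix σ τ ρ j ≠ σ j).card < (s.filter fun j ↦ τ j ≠ σ j).card := by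
  obtain ⟨j, hj, hjρ⟩ : ∃ j ∈ s, ρ j ≠ σ j := by
    by_contra! h
    exact hne (occupancy_congr h)
  exact card_filter_ne_lt_of_mix (complementaryMix_eq_or σ τ ρ) hj
    ((hρ j).resolve_left hjρ ▸ hjρ) (by simp [complementaryMix, hjρ])

end Occupancy

section ConvexCost

variable {ι κ E : Type*} [AddCommMonoid E] [PartialOrder E]

/-- Convexity of a sequence, i.e. monotonicity of its increments `h (n + 1) - h n`, written without
subtraction. -/
def IsConvexSeq (h : ℕ → E) : Prop :=
  ∀ ⦃m n : ℕ⦄, m ≤ n → h (m + 1) + h n ≤ h m + h (n + 1)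

variable [DecidableEq κ] {s : Finset ι} {σ τ ρ : ι → κ}

lemma sum_add_sum_complementaryMix_le [IsOrderedAddMonoid E] [Fintype κ] {h : κ → ℕ → E}
    (hconv : ∀ k, IsConvexSeq (h k)) {p q : κ} (hρ : ∀ j, ρ j = σ j ∨ ρ j = τ j)
    (hpq : IsUnitTransfer (occupancy s σ) (occupancy s ρ) p q)
    (hp : occupancy s τ p < occupancy s σ p) (hq : occupancy s σ q < occupancy s τ q) :
    ∑ k, h k (occupancy s ρ k) + ∑ k, h k (occupancy s (complementaryMix σ τ ρ) k) ≤
      ∑ k, h k (occupancy s σ k) + ∑ k, h k (occupancy s τ k) := by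
  have hne : p ≠ q := by
    rintro rfl
    exact hp.asymm hq
  rw [← Finset.sum_add_distrib, ← Finset.sum_add_distrib]
  refine Finset.sum_le_sum fun k _ ↦ ?_
  have hk : occupancy s ρ k + occupancy s (complementaryMix σ τ ρ) k =
      occupancy s σ k + occupancy s τ k :=
    congrFun (occupancy_add_occupancy_complementaryMix hρ) k
  rcases eq_or_ne k p with rfl | hkp
  · have hsource := hpq.apply_source hne
    rw [← hsource, add_comm (h k _), add_comm (h k (_ + 1)),
      show occupancy s (complementaryMix σ τ ρ) k = occupancy s τ k + 1 by omega]
    exact hconv k (by omega)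
  rcases eq_or_ne k q with rfl | hkq
  · have htarget := hpq.apply_target hne
    rw [htarget, show occupancy s τ k = occupancy s (complementaryMix σ τ ρ) k + 1 by omega]
    exact hconv k (by omega)
  · have hfix := hpq.apply_of_ne hkp hkq
    rw [hfix, show occupancy s (complementaryMix σ τ ρ) k = occupancy s τ k by omega]

theorem sum_occupancy_le_of_forall_isUnitTransfer [IsOrderedCancelAddMonoid E] [Fintype κ]
    {h : κ → ℕ → E} (hconv : ∀ k, IsConvexSeq (h k))
    (hlocal : ∀ ρ p q, (∀ j, ρ j = σ j ∨ ρ j = τ j) → p ≠ q →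
      IsUnitTransfer (occupancy s σ) (occupancy s ρ) p q →
      ∑ k, h k (occupancy s σ k) ≤ ∑ k, h k (occupancy s ρ k)) :
    ∑ k, h k (occupancy s σ k) ≤ ∑ k, h k (occupancy s τ k) := by
  induction hn : (s.filter fun j ↦ τ j ≠ σ j).card using Nat.strong_induction_on
    generalizing τ with
  | _ n ih =>
    by_cases hloss : ∃ p, occupancy s τ p < occupancy s σ p
    · obtain ⟨p, hp⟩ := hloss
      obtain ⟨ρ, q, hρ, hq, hpq⟩ := exists_isUnitTransfer hp
      have hne : p ≠ q := by
        rintro rfl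
        exact hp.asymm hq
      have hsource := hpq.apply_source hne
      have hcloser := card_complementaryMix_ne_lt hρ fun heq ↦ by
        rw [heq] at hsource
        omega
      have hmix := ih _ (hn ▸ hcloser) (τ := complementaryMix σ τ ρ)
        (fun ρ' p' q' hρ' ↦ hlocal ρ' p' q' fun j ↦
          (hρ' j).elim .inl fun hj ↦ hj ▸ (complementaryMix_eq_or σ τ ρ j).symm) rfl
      exact le_of_add_le_add_left <| (add_le_add (hlocal ρ p q hρ hne hpq) hmix).trans
        (sum_add_sum_complementaryMix_le hconv hρ hpq hp hq)
    · push Not at hloss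
      have heq : ∀ k ∈ Finset.univ, occupancy s σ k = occupancy s τ k :=
        (Finset.sum_eq_sum_iff_of_le fun k _ ↦ hloss k).1 (by simp only [sum_occupancy])
      exact (Finset.sum_congr rfl fun k hk ↦ by rw [heq k hk]).le

end ConvexCost

section FactorialCost

open scoped Nat

/-- The total cost of `z` coalition members sharing a resource with `b` outsiders, if every user of
a resource of load `s` pays `s!`. -/
def coalitionCost (b z : ℕ) : ℕ := z * (z + b)!

/-- The cost increment `coalitionCost b (z + 1) - coalitionCost b z`, in a form that shows its
dependence on the load `z + b`. -/
def marginalCost (b z : ℕ) : ℕ := (z + b)! * (z + b + 1 + z * (z + b))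

lemma coalitionCost_succ (b z : ℕ) :
    coalitionCost b (z + 1) = coalitionCost b z + marginalCost b z := by
  rw [coalitionCost, coalitionCost, marginalCost, add_right_comm, Nat.factorial_succ]
  ring

lemma marginalCost_mono (b : ℕ) : Monotone (marginalCost b) := fun m n hmn ↦ by
  unfold marginalCost
  gcongr

lemma isConvexSeq_coalitionCost (b : ℕ) : IsConvexSeq (coalitionCost b) := fun m n hmn ↦ by
  rw [coalitionCost_succ, coalitionCost_succ]
  have := marginalCost_mono b hmn
  omega

lemma marginalCost_le_marginalCost {b z b' z' : ℕ} (hload : z + b ≤ z' + b')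
    (hmem : z + b = z' + b' → z ≤ z') : marginalCost b z ≤ marginalCost b' z' := by
  unfold marginalCost
  rcases hload.eq_or_lt with heq | hlt
  · have := hmem heq
    rw [heq]
    gcongr
  · calc (z + b)! * (z + b + 1 + z * (z + b))
        ≤ (z + b)! * ((z + b + 1) * (z + b + 2)) := by gcongr; nlinarith
      _ = (z + b + 1)! * (z + b + 2) := by rw [Nat.factorial_succ]; ring
      _ ≤ (z' + b')! * (z' + b' + 1 + z' * (z' + b')) :=
        Nat.mul_le_mul (Nat.factorial_le hlt) (by omega)

lemma sum_coalitionCost_le_of_isUnitTransfer {κ : Type*} [Fintype κ] [DecidableEq κ]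
    {g g' b : κ → ℕ} {p q : κ} (h : IsUnitTransfer g g' p q) (hpq : p ≠ q)
    (hload : g p + b p ≤ g q + b q + 1)
    (hmem : g p + b p = g q + b q + 1 → g p ≤ g q + 1) :
    ∑ k, coalitionCost (b k) (g k) ≤ ∑ k, coalitionCost (b k) (g' k) := by
  have hp := h.apply_source hpq
  have hmarginal : marginalCost (b p) (g' p) ≤ marginalCost (b q) (g q) :=
    marginalCost_le_marginalCost (by omega) (by omega)
  refine h.sum_le_sum hpq (fun k ↦ coalitionCost (b k)) ?_
  rw [← hp, h.apply_target hpq, coalitionCost_succ, coalitionCost_succ]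
  omega

lemma sum_coalitionCost_lt_of_forall_load_le {ι κ : Type*} [Fintype κ] [DecidableEq κ]
    {c : Finset ι} {σ τ : ι → κ} {b : κ → ℕ}
    (hle : ∀ j ∈ c, occupancy c τ (τ j) + b (τ j) ≤ occupancy c σ (σ j) + b (σ j))
    (hlt : ∃ j ∈ c, occupancy c τ (τ j) + b (τ j) < occupancy c σ (σ j) + b (σ j)) :
    ∑ k, coalitionCost (b k) (occupancy c τ k) < ∑ k, coalitionCost (b k) (occupancy c σ k) := by
  obtain ⟨j, hj, hjlt⟩ := hlt
  have hpos := occupancy_pos hj τ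
  simp only [coalitionCost, sum_occupancy_mul]
  exact Finset.sum_lt_sum (fun i hi ↦ Nat.factorial_le (hle i hi))
    ⟨j, hj, (Nat.factorial_lt (by omega)).2 hjlt⟩

end FactorialCost

section Allocations

variable {ι κ : Type*}

lemma IsAllocation.finite [Finite κ] {a : κ → Finset ι} (ha : IsAllocation a) : Finite ι :=
  Set.finite_univ_iff.1 <| (Set.finite_iUnion fun k ↦ (a k).finite_toSet).subset fun j _ ↦
    Set.mem_iUnion.2 (ha.2 j)

variable [Fintype ι] [DecidableEq κ]

/-- The allocation that gives each resource the agents which `σ` assigns to it. -/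
def assignedAgents (σ : ι → κ) (k : κ) : Finset ι :=
  Finset.univ.filter fun j ↦ σ j = k

@[simp]
lemma mem_assignedAgents {σ : ι → κ} {k : κ} {j : ι} : j ∈ assignedAgents σ k ↔ σ j = k := by
  simp [assignedAgents]

lemma isAllocation_assignedAgents (σ : ι → κ) : IsAllocation (assignedAgents σ) :=
  ⟨fun _ _ hkm ↦ Finset.disjoint_left.2 fun _ hj hj' ↦
    hkm ((mem_assignedAgents.1 hj).symm.trans (mem_assignedAgents.1 hj')),
    fun j ↦ ⟨σ j, mem_assignedAgents.2 rfl⟩⟩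

lemma IsAllocation.exists_eq_assignedAgents {a : κ → Finset ι} (ha : IsAllocation a) :
    ∃ σ : ι → κ, a = assignedAgents σ := by
  choose σ hσ using ha.2
  refine ⟨σ, funext fun k ↦ Finset.ext fun j ↦ Iff.trans ⟨fun hj ↦ ?_, ?_⟩ mem_assignedAgents.symm⟩
  · by_contra hne
    exact Finset.disjoint_left.1 (ha.1 _ _ hne) (hσ j) hj
  · rintro rfl
    exact hσ j

lemma Feasible.assignedAgents_of_mix {f : κ → Finset ι} {σ τ ρ : ι → κ}
    (hσ : Feasible f (assignedAgents σ)) (hτ : Feasible f (assignedAgents τ))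
    (hρ : ∀ j, ρ j = σ j ∨ ρ j = τ j) : Feasible f (assignedAgents ρ) := fun k j hj ↦ by
  rcases hρ j with h | h <;> rw [mem_assignedAgents, h] at hj
  exacts [hσ k (mem_assignedAgents.2 hj), hτ k (mem_assignedAgents.2 hj)]

lemma kernel_assignedAgents [Fintype κ] (σ : ι → κ) :
    kernel (assignedAgents σ) =
      ((Finset.univ.val.map (occupancy Finset.univ σ)).sort (· ≤ ·)).reverse :=
  rfl

variable [DecidableEq ι]

lemma ckernel_assignedAgents [Fintype κ] (c : Finset ι) (σ : ι → κ) :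
    ckernel c (assignedAgents σ) =
      ((Finset.univ.val.map (occupancy c σ)).sort (· ≤ ·)).reverse := by
  have hinter (k : κ) : (c ∩ assignedAgents σ k).card = occupancy c σ k := by
    simp [assignedAgents, occupancy, Finset.inter_filter]
  simp only [ckernel, hinter]

lemma eq_of_assignedAgents_sdiff_eq {c : Finset ι} {σ τ : ι → κ}
    (h : ∀ k, assignedAgents σ k \ c = assignedAgents τ k \ c) {j : ι} (hj : j ∉ c) :
    σ j = τ j := by
  have hmem : j ∈ assignedAgents τ (σ j) \ c := h (σ j) ▸ by simp [hj]
  exact (mem_assignedAgents.1 (Finset.mem_sdiff.1 hmem).1).symm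

lemma balanceDominates_of_isUnitTransfer [Fintype κ] {C : Set (Finset ι)}
    (hC : C.PairwiseDisjoint id) {c : Finset ι} (hc : c ∈ C) {σ ρ : ι → κ}
    (hout : ∀ j ∉ c, ρ j = σ j) {p q : κ}
    (hload : IsUnitTransfer (occupancy Finset.univ σ) (occupancy Finset.univ ρ) p q)
    (hmem : IsUnitTransfer (occupancy c σ) (occupancy c ρ) p q)
    (heq : occupancy Finset.univ σ p = occupancy Finset.univ σ q + 1)
    (hlt : occupancy c σ q + 1 < occupancy c σ p) :
    BalanceDominates C (assignedAgents ρ) (assignedAgents σ) := by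
  have hlex : List.Lex (· < ·) (ckernel c (assignedAgents ρ)) (ckernel c (assignedAgents σ)) := by
    simpa only [ckernel_assignedAgents] using hmem.lex_sort_map hlt
  refine .inr ⟨?_, fun d hd ↦ ?_, c, hc, hlex⟩
  · rw [kernel_assignedAgents, kernel_assignedAgents, hload.map_univ_eq heq]
  · rcases eq_or_ne d c with rfl | hdc
    · exact .inr hlex
    · have hocc : occupancy d ρ = occupancy d σ := occupancy_congr fun j hj ↦
        hout j (Finset.disjoint_left.1 (hC hd hc hdc) hj)
      exact .inl (by rw [ckernel_assignedAgents, ckernel_assignedAgents, hocc])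

lemma sum_coalitionCost_le_of_not_balanceDominates [Fintype κ] {C : Set (Finset ι)}
    (hC : C.PairwiseDisjoint id) {c : Finset ι} (hc : c ∈ C) {σ ρ : ι → κ}
    (hout : ∀ j ∉ c, ρ j = σ j) {p q : κ} (hpq : p ≠ q)
    (hmem : IsUnitTransfer (occupancy c σ) (occupancy c ρ) p q)
    (hnot : ¬ BalanceDominates C (assignedAgents ρ) (assignedAgents σ)) :
    ∑ k, coalitionCost (occupancy cᶜ σ k) (occupancy c σ k) ≤
      ∑ k, coalitionCost (occupancy cᶜ σ k) (occupancy c ρ k) := by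
  have hrest : occupancy cᶜ ρ = occupancy cᶜ σ :=
    occupancy_congr fun j hj ↦ hout j (Finset.mem_compl.1 hj)
  have hload : IsUnitTransfer (occupancy Finset.univ σ) (occupancy Finset.univ ρ) p q := by
    rw [← occupancy_add_occupancy_compl c σ, ← occupancy_add_occupancy_compl c ρ, hrest]
    exact hmem.add_right _
  have hsplit (k : κ) : occupancy c σ k + occupancy cᶜ σ k = occupancy Finset.univ σ k :=
    congrFun (occupancy_add_occupancy_compl c σ) k
  refine sum_coalitionCost_le_of_isUnitTransfer hmem hpq ?_ fun heq ↦ ?_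
  · rw [hsplit, hsplit]
    by_contra! hlt
    exact hnot (.inl (hload.lex_sort_map hlt))
  · rw [hsplit, hsplit] at heq
    by_contra! hlt
    exact hnot (balanceDominates_of_isUnitTransfer hC hc hout hload hmem heq hlt)

lemma sum_coalitionCost_lt_of_blocksVia [Fintype κ] {f : κ → Finset ι} {c : Finset ι}
    {σ τ : ι → κ} (h : BlocksVia f c (assignedAgents σ) (assignedAgents τ)) :
    ∑ k, coalitionCost (occupancy cᶜ σ k) (occupancy c τ k) <
      ∑ k, coalitionCost (occupancy cᶜ σ k) (occupancy c σ k) := by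
  obtain ⟨-, -, hout, hle, j₀, hj₀, k, m, hk, hm, hlt⟩ := h
  obtain rfl := mem_assignedAgents.1 hk
  obtain rfl := mem_assignedAgents.1 hm
  have hσ (k : κ) : occupancy c σ k + occupancy cᶜ σ k = (assignedAgents σ k).card :=
    congrFun (occupancy_add_occupancy_compl c σ) k
  have hτ (k : κ) : occupancy c τ k + occupancy cᶜ σ k = (assignedAgents τ k).card := by
    rw [occupancy_congr fun j hj ↦ eq_of_assignedAgents_sdiff_eq hout (Finset.mem_compl.1 hj)]
    exact congrFun (occupancy_add_occupancy_compl c τ) k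
  refine sum_coalitionCost_lt_of_forall_load_le (fun j hj ↦ ?_) ⟨j₀, hj₀, ?_⟩
  · rw [hσ, hτ]
    exact hle j hj _ _ (by simp) (by simp)
  · rwa [hσ, hτ]

end Allocations

theorem maximal_is_partition_stable_general
    {N M : Type*} [DecidableEq N] [Fintype M]
    {f : M → Finset N} {C : Set (Finset N)} (hC : C.PairwiseDisjoint id)
    {a : M → Finset N} (ha : IsAllocation a) (haf : Feasible f a)
    (hmax : ∀ abar : M → Finset N, IsAllocation abar → Feasible f abar →
      ¬ BalanceDominates C abar a) :
    ∀ c ∈ C, ¬ Blocks f c a := by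
  classical
  have := ha.finite
  have := Fintype.ofFinite N
  rintro c hc ⟨abar, hblocks⟩
  obtain ⟨σ, rfl⟩ := ha.exists_eq_assignedAgents
  obtain ⟨τ, rfl⟩ := hblocks.1.exists_eq_assignedAgents
  have hout : ∀ j ∉ c, σ j = τ j := fun j ↦ eq_of_assignedAgents_sdiff_eq hblocks.2.2.1
  refine (sum_coalitionCost_lt_of_blocksVia hblocks).not_ge <|
    sum_occupancy_le_of_forall_isUnitTransfer (fun k ↦ isConvexSeq_coalitionCost _)
      fun ρ p q hρ hpq htransfer ↦ ?_
  have hρout : ∀ j ∉ c, ρ j = σ j := fun j hj ↦ (hρ j).elim id fun h ↦ h.trans (hout j hj).symm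
  exact sum_coalitionCost_le_of_not_balanceDominates hC hc hρout hpq htransfer <|
    hmax _ (isAllocation_assignedAgents ρ) (haf.assignedAgents_of_mix hblocks.2.1 hρ)

/-- Every feasible allocation maximal w.r.t. `C`-balance dominance is `C`-stable. -/
theorem maximal_is_partition_stable
    {N M : Type*} [Fintype N] [DecidableEq N] [Fintype M] [DecidableEq M]
    [Nonempty N] [Nonempty M]
    (f : M → Finset N) (hf : ∀ j : N, ∃ i : M, j ∈ f i)
    (C : Set (Finset N)) (hC : IsPartitionStructure C)
    (a : M → Finset N) (ha : IsAllocation a) (haf : Feasible f a)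
    (hmax : ∀ abar : M → Finset N, IsAllocation abar → Feasible f abar →
      ¬ BalanceDominates C abar a) :
    ∀ c ∈ C, ¬ Blocks f c a := by
  exact maximal_is_partition_stable_general (fun c hc d hd ↦ hC.2.1 c hc d hd) ha haf hmax
end

section
/- Let C be a partition coalition structure of an ISCG, let j₁ be an agent in a coalition c ∈ C, and let allocations a and ā be such that ā = a ⊕ i₁→(j₁)→i₂ (i.e., j₁ moves from resource i₁ to resource i₂ and all other agents keep their resource). If |a_{i₁}| ≥ |a_{i₂}| + 2, then ā C-balance dominates a. -/
/-!
Moving an agent lowers the load `|a i₁|` to `|a i₁| - 1`, and the only load it raises stays below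
`|a i₁|`. So no load above `|a i₁|` becomes more frequent, while the load `|a i₁|` itself becomes
rarer. For lists sorted in nonincreasing order, this forces a lexicographic decrease.
-/

variable {N M : Type*} [Fintype N] [DecidableEq N] [Fintype M] [DecidableEq M]

section Lex

variable {α : Type*} [LinearOrder α] {x : α}

theorem lex_lt_of_count_lt_of_forall_count_le : ∀ {l₁ l₂ : List α}, l₂.SortedGE →
    l₁.count x < l₂.count x → (∀ y, x < y → l₁.count y ≤ l₂.count y) →
    List.Lex (· < ·) l₁ l₂
  | _, [], _, hx, _ => absurd hx (Nat.not_lt_zero _)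
  | [], _ :: _, _, _, _ => .nil
  | u :: t₁, v :: t₂, hsorted, hx, habove => by
    have head_max : ∀ z ∈ v :: t₂, z ≤ v :=
      List.forall_mem_cons.2 ⟨le_rfl, (List.pairwise_cons.1 hsorted.pairwise).1⟩
    have head_le : u ≤ v := by
      rcases lt_or_ge x u with hxu | hux
      · have hu : 0 < (u :: t₁).count u := List.count_pos_iff.2 List.mem_cons_self
        exact head_max u (List.count_pos_iff.1 (hu.trans_le (habove u hxu)))
      · exact hux.trans (head_max x (List.count_pos_iff.1 (Nat.zero_lt_of_lt hx)))
    rcases head_le.lt_or_eq with huv | rfl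
    · exact .rel huv
    · simp only [List.count_cons, add_lt_add_iff_right, add_le_add_iff_right] at hx habove
      exact .cons (lex_lt_of_count_lt_of_forall_count_le hsorted.pairwise.of_cons.sortedGE
        hx habove)

end Lex

section Kernel

open Finset

variable {Agent Resource : Type*} [Fintype Resource] {a b : Resource → Finset Agent}

theorem sortedGE_kernel (a : Resource → Finset Agent) : (kernel a).SortedGE :=
  (Multiset.pairwise_sort _ _).sortedLE.reverse

theorem count_kernel (a : Resource → Finset Agent) (s : ℕ) :
    (kernel a).count s = #{i | #(a i) = s} := by
  rw [kernel, List.count_reverse, ← Multiset.coe_count, Multiset.sort_eq, Multiset.count_map]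
  exact congrArg card (filter_congr fun _ _ ↦ eq_comm)

theorem kernel_lex_lt_of_card_lt {i₀ : Resource} (hlt : #(b i₀) < #(a i₀))
    (card_eq : ∀ i, #(a i₀) ≤ #(b i) → #(b i) = #(a i)) :
    List.Lex (· < ·) (kernel b) (kernel a) := by
  have fiber_subset {s : ℕ} (hs : #(a i₀) ≤ s) :
      ({i | #(b i) = s} : Finset Resource) ⊆ ({i | #(a i) = s} : Finset Resource) :=
    monotone_filter_right _ fun i _ (hi : #(b i) = s) ↦ (card_eq i (hi ▸ hs)).symm.trans hi
  refine lex_lt_of_count_lt_of_forall_count_le (x := #(a i₀)) (sortedGE_kernel a) ?_ fun s hs ↦ ?_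
  · simp only [count_kernel]
    refine card_lt_card ((fiber_subset le_rfl).ssubset_of_mem_notMem (a := i₀) ?_ ?_)
    · simp
    · simp [hlt.ne]
  · simpa only [count_kernel] using card_le_card (fiber_subset hs.le)

end Kernel

section Move

open Finset Function

variable {Agent Resource : Type*} {a b : Resource → Finset Agent} {i₁ i₂ i : Resource} {j : Agent}

/-- The relation `b = a ⊕ i₁→(j)→i₂`: agent `j` moves from resource `i₁` to resource `i₂`, and
all other agents stay where they are. Neither `a` nor `b` is required to be an allocation, so `j`
may occur in further resources. -/
structure IsMove (a : Resource → Finset Agent) (i₁ : Resource) (j : Agent) (i₂ : Resource)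
    (b : Resource → Finset Agent) : Prop where
  ne : i₁ ≠ i₂
  mem_source : j ∈ a i₁
  mem_target : j ∈ b i₂
  mem_iff_of_ne : ∀ k, k ≠ j → ∀ i, k ∈ a i ↔ k ∈ b i

namespace IsMove

theorem notMem_of_ne_source (h : IsMove a i₁ j i₂ b) (ha : Pairwise (Disjoint on a))
    (hi : i ≠ i₁) : j ∉ a i :=
  disjoint_right.1 (ha hi) h.mem_source

theorem notMem_of_ne_target (h : IsMove a i₁ j i₂ b) (hb : Pairwise (Disjoint on b))
    (hi : i ≠ i₂) : j ∉ b i :=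
  disjoint_right.1 (hb hi) h.mem_target

theorem eq_erase [DecidableEq Agent] (h : IsMove a i₁ j i₂ b) (hb : Pairwise (Disjoint on b))
    (hi : i ≠ i₂) : b i = (a i).erase j := by
  ext k
  rcases eq_or_ne k j with rfl | hk
  · simp [h.notMem_of_ne_target hb hi]
  · simp [hk, h.mem_iff_of_ne k hk i]

theorem target_eq_insert [DecidableEq Agent] (h : IsMove a i₁ j i₂ b) : b i₂ = insert j (a i₂) := by
  ext k
  rcases eq_or_ne k j with rfl | hk
  · simp [h.mem_target]
  · simp [hk, h.mem_iff_of_ne k hk i₂]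

theorem kernel_lex_lt [Fintype Resource] (h : IsMove a i₁ j i₂ b)
    (ha : Pairwise (Disjoint on a)) (hb : Pairwise (Disjoint on b))
    (hcard : #(a i₂) + 2 ≤ #(a i₁)) : List.Lex (· < ·) (kernel b) (kernel a) := by
  classical
  have source_lt : #(b i₁) < #(a i₁) := by
    rw [h.eq_erase hb h.ne]
    exact card_erase_lt_of_mem h.mem_source
  have target_lt : #(b i₂) < #(a i₁) := by
    rw [h.target_eq_insert]
    exact (card_insert_le j (a i₂)).trans_lt hcard
  refine kernel_lex_lt_of_card_lt source_lt fun i hle ↦ ?_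
  have hi₁ : i ≠ i₁ := by rintro rfl; exact hle.not_gt source_lt
  have hi₂ : i ≠ i₂ := by rintro rfl; exact hle.not_gt target_lt
  rw [h.eq_erase hb hi₂, erase_eq_of_notMem (h.notMem_of_ne_source ha hi₁)]

end IsMove

theorem move_balance_dominates_of_card_ge_add_two_general [DecidableEq Agent] [Fintype Resource]
    (C : Set (Finset Agent)) (h : IsMove a i₁ j i₂ b)
    (ha : Pairwise (Disjoint on a)) (hb : Pairwise (Disjoint on b))
    (hcard : #(a i₂) + 2 ≤ #(a i₁)) : BalanceDominates C b a :=
  .inl (h.kernel_lex_lt ha hb hcard)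

end Move

/-- Lemma 2(a): if `abar = a ⊕ i₁→(j₁)→i₂` and `|a i₁| ≥ |a i₂| + 2`, then `abar`
`C`-balance dominates `a`. -/
theorem move_balance_dominates_of_card_ge_add_two
    {N M : Type*} [Fintype N] [DecidableEq N] [Fintype M] [DecidableEq M]
    (C : Set (Finset N)) (hC : IsPartitionStructure C)
    (c : Finset N) (hc : c ∈ C) (j₁ : N) (hj₁ : j₁ ∈ c)
    (i₁ i₂ : M) (hi : i₁ ≠ i₂)
    (a abar : M → Finset N) (ha : IsAllocation a) (habar : IsAllocation abar)
    (h₁ : j₁ ∈ a i₁) (h₂ : j₁ ∈ abar i₂)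
    (hrest : ∀ j : N, j ≠ j₁ → ∀ i : M, j ∈ a i ↔ j ∈ abar i)
    (hcard : (a i₂).card + 2 ≤ (a i₁).card) :
    BalanceDominates C abar a :=
  move_balance_dominates_of_card_ge_add_two_general C ⟨hi, h₁, h₂, hrest⟩
    (fun i k ↦ ha.1 i k) (fun i k ↦ habar.1 i k) hcard
end

section
/- Let c be a coalition in an ISCG and let a be a feasible allocation. If c blocks a and ã is the allocation induced when c blocks a, then ã c-welfare-dominates a, i.e., w(c,ã) is lexicographically smaller than w(c,a). -/
/-!
On the coalition, the congestion `y` after the deviation is at most the congestion `x` before it,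
with strict inequality somewhere. Let `s` be the largest value of `x` at a strictly improving
member. A member with `x > s` does not improve, so it has `y = x`; since `y ≤ x`, every member with
`y ≥ s` also has `y = x`. Hence the two welfare kernels agree at all sizes above `s`, while at size
`s` no member arrives and the chosen improving one leaves, so that entry drops.
-/

variable {N M : Type*} [Fintype N] [DecidableEq N] [Fintype M] [DecidableEq M]

lemma exists_card_fiber_lt_of_le_of_lt {ι α : Type*} [LinearOrder α] {c : Finset ι} {x y : ι → α}
    (hle : ∀ j ∈ c, y j ≤ x j) (hlt : ∃ j ∈ c, y j < x j) :
    ∃ s, (∀ u > s, (c.filter (y · = u)).card = (c.filter (x · = u)).card) ∧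
      (c.filter (y · = s)).card < (c.filter (x · = s)).card := by
  have himproving : (c.filter fun j => y j < x j).Nonempty := Finset.filter_nonempty_iff.mpr hlt
  obtain ⟨j₀, hj₀, hmax⟩ := Finset.exists_max_image _ x himproving
  obtain ⟨hj₀c, hj₀lt⟩ := Finset.mem_filter.mp hj₀
  have hstay : ∀ j ∈ c, x j₀ < x j → y j = x j := fun j hj h =>
    (hle j hj).eq_of_not_lt fun hj_lt => h.not_ge (hmax j (Finset.mem_filter.mpr ⟨hj, hj_lt⟩))
  have hstay_of_le : ∀ j ∈ c, x j₀ ≤ y j → y j = x j := fun j hj h =>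
    (lt_or_ge (x j₀) (x j)).elim (hstay j hj) fun hx => (hle j hj).antisymm (hx.trans h)
  refine ⟨x j₀, fun u hu => ?_, Finset.card_lt_card ?_⟩
  · refine congrArg Finset.card (Finset.filter_congr fun j hj => ⟨?_, ?_⟩)
    · rintro rfl
      exact (hstay_of_le j hj hu.le).symm
    · rintro rfl
      exact hstay j hj hu
  · refine Finset.ssubset_iff_of_subset (fun j hj => ?_) |>.mpr
      ⟨j₀, Finset.mem_filter.mpr ⟨hj₀c, rfl⟩, fun h => hj₀lt.ne (Finset.mem_filter.mp h).2⟩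
    obtain ⟨hjc, hy⟩ := Finset.mem_filter.mp hj
    exact Finset.mem_filter.mpr ⟨hjc, (hstay_of_le j hjc hy.ge).symm.trans hy⟩

lemma lex_lt_map_range {α : Type*} [LT α] {g h : ℕ → α} {n k : ℕ} (hk : k < n)
    (heq : ∀ t < k, g t = h t) (hlt : g k < h k) :
    List.Lex (· < ·) ((List.range n).map g) ((List.range n).map h) := by
  refine List.lt_iff_exists.mpr (Or.inr ⟨k, by simpa using hk, by simpa using hk, ?_, ?_⟩)
  · simpa only [List.getElem_map, List.getElem_range] using heq
  · simpa only [List.getElem_map, List.getElem_range] using hlt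

section Congestion

variable {N M : Type*} [DecidableEq N] [Fintype M] {a : M → Finset N} {i : M} {j : N}

/-- The congestion experienced by agent `j`: the cardinality of the resource holding `j`. It is
encoded as a sum over all resources holding `j`, of which an allocation has exactly one. -/
def congestion (a : M → Finset N) (j : N) : ℕ :=
  ∑ i with j ∈ a i, (a i).card

lemma IsAllocation.congestion_eq (ha : IsAllocation a) (hj : j ∈ a i) :
    congestion a j = (a i).card := by
  have hunique : ∀ k, j ∈ a k → k = i := fun k hk =>
    by_contra fun hne => Finset.disjoint_left.mp (ha.1 k i hne) hk hj
  exact Finset.sum_eq_single_of_mem i (Finset.mem_filter_univ i |>.mpr hj) fun k hk hne =>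
    absurd (hunique k (Finset.mem_filter.mp hk).2) hne

lemma IsAllocation.congestion_pos (ha : IsAllocation a) (j : N) : 0 < congestion a j := by
  obtain ⟨i, hi⟩ := ha.2 j
  exact ha.congestion_eq hi ▸ Finset.card_pos.mpr ⟨j, hi⟩

variable [Fintype N]

lemma IsAllocation.congestion_le_card (ha : IsAllocation a) (j : N) :
    congestion a j ≤ Fintype.card N := by
  obtain ⟨i, hi⟩ := ha.2 j
  exact ha.congestion_eq hi ▸ Finset.card_le_univ (a i)

lemma IsAllocation.wkernel_eq (ha : IsAllocation a) (c : Finset N) :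
    wkernel c a = (List.range (Fintype.card N)).map fun t =>
      (c.filter (congestion a · = Fintype.card N - t)).card := by
  refine List.map_congr_left fun t _ => congrArg Finset.card (Finset.filter_congr fun j _ => ?_)
  obtain ⟨i, hi⟩ := ha.2 j
  constructor
  · rintro ⟨k, hk, hcard⟩
    exact (ha.congestion_eq hk).trans hcard
  · exact fun h => ⟨i, hi, (ha.congestion_eq hi).symm.trans h⟩

end Congestion

theorem induced_allocation_welfare_dominates_general
    {N M : Type*} [Fintype N] [DecidableEq N] [Fintype M]
    (c : Finset N) (a atil : M → Finset N) (ha : IsAllocation a) (hatil : IsAllocation atil)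
    (hle : ∀ j ∈ c, ∀ i₁ i₂ : M, j ∈ a i₁ → j ∈ atil i₂ → (atil i₂).card ≤ (a i₁).card)
    (hlt : ∃ j ∈ c, ∃ i₁ i₂ : M, j ∈ a i₁ ∧ j ∈ atil i₂ ∧ (atil i₂).card < (a i₁).card) :
    List.Lex (· < ·) (wkernel c atil) (wkernel c a) := by
  have hcongestion_le : ∀ j ∈ c, congestion atil j ≤ congestion a j := fun j hj => by
    obtain ⟨i₁, hi₁⟩ := ha.2 j
    obtain ⟨i₂, hi₂⟩ := hatil.2 j
    simpa only [ha.congestion_eq hi₁, hatil.congestion_eq hi₂] using hle j hj i₁ i₂ hi₁ hi₂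
  have hcongestion_lt : ∃ j ∈ c, congestion atil j < congestion a j := by
    obtain ⟨j, hj, i₁, i₂, hi₁, hi₂, h⟩ := hlt
    exact ⟨j, hj, by rwa [ha.congestion_eq hi₁, hatil.congestion_eq hi₂]⟩
  obtain ⟨s, habove, hs⟩ := exists_card_fiber_lt_of_le_of_lt hcongestion_le hcongestion_lt
  obtain ⟨j, hj⟩ := Finset.card_pos.mp hs.pos
  obtain rfl : congestion a j = s := (Finset.mem_filter.mp hj).2
  have hpos := ha.congestion_pos j
  have hcard := ha.congestion_le_card j
  rw [ha.wkernel_eq, hatil.wkernel_eq]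
  -- Since `0 < s ≤ n`, size `s` has the valid index `n - s`.
  refine lex_lt_map_range (k := Fintype.card N - congestion a j) (by omega)
    (fun t ht => habove _ (by omega)) ?_
  rwa [Nat.sub_sub_self hcard]

/-- Lemma 3(a): if coalition `c` blocks the feasible allocation `a` with induced allocation
`atil`, then `atil` `c`-welfare-dominates `a`. -/
theorem induced_allocation_welfare_dominates
    {N M : Type*} [Fintype N] [DecidableEq N] [Fintype M] [DecidableEq M]
    (f : M → Finset N) (c : Finset N) (hc : c.Nonempty)
    (a atil : M → Finset N) (ha : IsAllocation a) (haf : Feasible f a)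
    (hblock : BlocksVia f c a atil) :
    List.Lex (· < ·) (wkernel c atil) (wkernel c a) :=
  have ⟨hatil, _, _, hle, hlt⟩ := hblock
  induced_allocation_welfare_dominates_general c a atil ha hatil hle hlt
end
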